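/- For every matrix M ∈ ℝ^{k×m}, the squared Frobenius norm ‖Y − U·M‖_F² is at least one half of the number of indices i ∈ {1,…,n} for which there exists j ≠ y(i) with (U·M)_{i,j} ≥ (U·M)_{i,y(i)}. Consequently, the least-squares residual min_{M∈ℝ^{k×m}} ‖Y − U·M‖_F² is at least one half of the minimal number of misclassified rows achievable by any linear classifier M (where row i is misclassified if some coordinate j ≠ y(i) of the i-th row of U·M is at least the coordinate y(i)). -/

import Mathlib

open scoped Classical

/-!
If row `i` is misclassified, then `s = (U * M) i` satisfies `s (y i) ≤ s j` for some `j ≠ y i`,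
whereas the one-hot target takes the values `1` and `0` there. The errors `1 - s (y i)` and `s j`
therefore add up to at least `1`, so their squares add up to at least `1 / 2`: every misclassified
row contributes at least `1 / 2` to the residual. The same argument bounds the residual of each
member of an arbitrary family of score matrices, and the bound passes to the infimum.
-/

theorem card_filter_nsmul_le_sum {ι N : Type*} [AddCommMonoid N] [PartialOrder N]
    [IsOrderedAddMonoid N] (s : Finset ι) {p : ι → Prop} [DecidablePred p] {f : ι → N} {b : N}
    (hf : ∀ i ∈ s, 0 ≤ f i) (hb : ∀ i ∈ s, p i → b ≤ f i) :
    (s.filter p).card • b ≤ ∑ i ∈ s, f i :=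
  calc (s.filter p).card • b ≤ ∑ i ∈ s.filter p, f i :=
        Finset.card_nsmul_le_sum _ _ _ fun i hi ↦
          hb i (Finset.mem_of_mem_filter i hi) (Finset.mem_filter.1 hi).2
    _ ≤ ∑ i ∈ s, f i :=
        Finset.sum_le_sum_of_subset_of_nonneg (Finset.filter_subset p s) fun i hi _ ↦ hf i hi

section OrderedField

variable {ι κ K : Type*} [Field K] [LinearOrder K] [IsStrictOrderedRing K]

theorem sub_sq_div_two_le_of_le_of_le {a b x y : K} (hba : b ≤ a) (hxy : x ≤ y) :
    (a - b) ^ 2 / 2 ≤ (a - x) ^ 2 + (b - y) ^ 2 := by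
  rw [div_le_iff₀' two_pos]
  calc (a - b) ^ 2 ≤ ((a - x) + (y - b)) ^ 2 :=
        pow_le_pow_left₀ (sub_nonneg.2 hba) (by linarith) 2
    _ ≤ 2 * ((a - x) ^ 2 + (y - b) ^ 2) := add_sq_le
    _ = 2 * ((a - x) ^ 2 + (b - y) ^ 2) := by rw [sub_sq_comm y b]

theorem sub_sq_div_two_le_sum_sub_sq [Fintype κ] {t s : κ → K} {c j : κ} (hjc : j ≠ c)
    (ht : t j ≤ t c) (hs : s c ≤ s j) :
    (t c - t j) ^ 2 / 2 ≤ ∑ l, (t l - s l) ^ 2 :=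
  calc (t c - t j) ^ 2 / 2 ≤ (t c - s c) ^ 2 + (t j - s j) ^ 2 :=
        sub_sq_div_two_le_of_le_of_le ht hs
    _ = ∑ l ∈ {c, j}, (t l - s l) ^ 2 := by rw [Finset.sum_pair hjc.symm]
    _ ≤ ∑ l, (t l - s l) ^ 2 := Finset.sum_le_univ_sum_of_nonneg fun _ ↦ sq_nonneg _

theorem half_le_sum_one_hot_sub_sq [Fintype κ] [DecidableEq κ] {t s : κ → K} {c : κ}
    (ht : ∀ j, t j = if j = c then 1 else 0) (hs : ∃ j, j ≠ c ∧ s c ≤ s j) :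
    1 / 2 ≤ ∑ j, (t j - s j) ^ 2 := by
  obtain ⟨j, hjc, hle⟩ := hs
  have htc : t c = 1 := by rw [ht, if_pos rfl]
  have htj : t j = 0 := by rw [ht, if_neg hjc]
  simpa [htc, htj] using sub_sq_div_two_le_sum_sub_sq (t := t) hjc (by simp [htc, htj]) hle

theorem card_misclassified_div_two_le_sum_sub_sq [Fintype ι] [Fintype κ] [DecidableEq κ]
    {y : ι → κ} {Y : Matrix ι κ K} (hY : ∀ i j, Y i j = if j = y i then 1 else 0)
    (S : Matrix ι κ K) :
    ((Finset.univ.filter fun i ↦ ∃ j, j ≠ y i ∧ S i (y i) ≤ S i j).card : K) / 2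
      ≤ ∑ i, ∑ j, (Y i j - S i j) ^ 2 := by
  rw [div_eq_mul_one_div, ← nsmul_eq_mul]
  exact card_filter_nsmul_le_sum _ (fun i _ ↦ Finset.sum_nonneg fun j _ ↦ sq_nonneg _)
    fun i _ hi ↦ half_le_sum_one_hot_sub_sq (hY i) hi

end OrderedField

theorem sInf_div_le_sInf_of_forall_div_le {α : Type*} [Nonempty α] {f g : α → ℝ} {c : ℝ}
    (hc : 0 ≤ c) (hf : BddBelow {x | ∃ a, x = f a}) (hfg : ∀ a, f a / c ≤ g a) :
    sInf {x | ∃ a, x = f a} / c ≤ sInf {x | ∃ a, x = g a} := by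
  refine le_csInf ⟨_, Classical.arbitrary α, rfl⟩ ?_
  rintro _ ⟨a, rfl⟩
  calc sInf {x | ∃ a, x = f a} / c ≤ f a / c :=
        div_le_div_of_nonneg_right (csInf_le hf ⟨a, rfl⟩) hc
    _ ≤ g a := hfg a

theorem residual_bounds_linear_probing_error_general {α ι κ : Type*} [Nonempty α] [Fintype ι]
    [Fintype κ] [DecidableEq κ] (S : α → Matrix ι κ ℝ) (y : ι → κ) (Y : Matrix ι κ ℝ)
    (hY : ∀ i j, Y i j = if j = y i then 1 else 0) :
    (∀ a, ((Finset.univ.filter fun i ↦ ∃ j, j ≠ y i ∧ S a i (y i) ≤ S a i j).card : ℝ) / 2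
      ≤ ∑ i, ∑ j, (Y i j - S a i j) ^ 2) ∧
    sInf {c : ℝ | ∃ a, c =
        ((Finset.univ.filter fun i ↦ ∃ j, j ≠ y i ∧ S a i (y i) ≤ S a i j).card : ℝ)} / 2
      ≤ sInf {r : ℝ | ∃ a, r = ∑ i, ∑ j, (Y i j - S a i j) ^ 2} := by
  have hbound := fun a ↦ card_misclassified_div_two_le_sum_sub_sq hY (S a)
  refine ⟨hbound, sInf_div_le_sInf_of_forall_div_le zero_le_two ⟨0, ?_⟩ hbound⟩
  rintro _ ⟨a, rfl⟩
  exact Nat.cast_nonneg _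

/-- The least-squares residual `‖Y − U·M‖_F²` upper-bounds half the number of rows
misclassified by the linear classifier `M`, and consequently
`min_M ‖Y − U·M‖_F² ≥ (1/2)·min_M #misclassified`. -/
theorem residual_bounds_linear_probing_error
    (n k m : ℕ) (hn : 0 < n) (hk : 0 < k) (hm : 0 < m)
    (U : Matrix (Fin n) (Fin k) ℝ) (y : Fin n → Fin m)
    (Y : Matrix (Fin n) (Fin m) ℝ)
    (hY : ∀ i j, Y i j = if j = y i then 1 else 0) :
    (∀ M : Matrix (Fin k) (Fin m) ℝ,
      (((Finset.univ.filter fun i : Fin n =>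
            ∃ j : Fin m, j ≠ y i ∧ (U * M) i (y i) ≤ (U * M) i j).card : ℝ)) / 2
        ≤ ∑ i, ∑ j, (Y i j - (U * M) i j) ^ 2) ∧
    sInf {c : ℝ | ∃ M : Matrix (Fin k) (Fin m) ℝ,
          c = ((Finset.univ.filter fun i : Fin n =>
            ∃ j : Fin m, j ≠ y i ∧ (U * M) i (y i) ≤ (U * M) i j).card : ℝ)} / 2
      ≤ sInf {r : ℝ | ∃ M : Matrix (Fin k) (Fin m) ℝ,
          r = ∑ i, ∑ j, (Y i j - (U * M) i j) ^ 2} := by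
  -- `convert` reconciles the two decidability instances for `∃ j : Fin m, _`.
  convert residual_bounds_linear_probing_error_general
    (fun M : Matrix (Fin k) (Fin m) ℝ ↦ U * M) y Y hY
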